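/- Let τ ∈ iℝ_{>0}, so 0 < q = exp(2πiτ) < 1, and let μ, x ∈ ℂ. Then 1 + 2·∑_{m=1}^{∞} cos(2πmτμ)·cos(2πmτx)·q^{m²} = ( (q²;q²)_∞ / 2 )·( ϑ(μ+x) + ϑ(μ−x) ), where ϑ(x) = (−q^{1+x}, −q^{1−x}; q²)_∞. Equivalently, the Askey–Wilson function at the self-dual parameters (a,b,c,d) = (0, 1/(2τ), 1, 1−1/(2τ)), which is given by 𝔈₀⁺(μ,x) = [ (−q,−q,−q,q,−q²;q²)_∞ / ( (q²;q²)_∞·ϑ(μ)·ϑ(x) ) ]·( 1 + 2·∑_{m=1}^{∞} cos(2πmτμ)·cos(2πmτx)·q^{m²} ), equals the elliptic cosine kernel: 𝔈₀⁺(μ,x) = ( (−q,−q;q²)_∞ / 2 )·( ϑ(μ+x) + ϑ(μ−x) ) / ( ϑ(μ)·ϑ(x) ) at all points where ϑ(μ)·ϑ(x) ≠ 0. -/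

import Mathlib

noncomputable section

open Complex

/-- `q^u = exp(2πiτu)`. -/
def qpow (τ u : ℂ) : ℂ := Complex.exp (2 * (Real.pi : ℂ) * Complex.I * τ * u)

/-- `(b;Q)_∞ = ∏_{n≥0}(1 − b·Qⁿ)`. -/
def pochInf (Q b : ℂ) : ℂ := ∏' n : ℕ, (1 - b * Q ^ n)

/-- The renormalized Jacobi theta function `ϑ(x) = (−q^{1+x}, −q^{1−x}; q²)_∞`. -/
def jTheta (τ x : ℂ) : ℂ :=
  pochInf (qpow τ 2) (-qpow τ (1 + x)) * pochInf (qpow τ 2) (-qpow τ (1 - x))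

/-- The kernel `1 + 2·∑_{m≥1} cos(2πmτμ)·cos(2πmτx)·q^{m²}`. -/
def cosKernel (τ mu x : ℂ) : ℂ :=
  1 + 2 * ∑' m : ℕ,
    Complex.cos (2 * (Real.pi : ℂ) * ((m : ℂ) + 1) * τ * mu) *
      Complex.cos (2 * (Real.pi : ℂ) * ((m : ℂ) + 1) * τ * x) *
      qpow τ (((m : ℂ) + 1) ^ 2)

/-- The Askey-Wilson function `𝔈₀⁺(μ,x)` at the self-dual parameters
`(a,b,c,d) = (0, 1/(2τ), 1, 1−1/(2τ))`. -/
def E0plus (τ mu x : ℂ) : ℂ :=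
  (pochInf (qpow τ 2) (-qpow τ 1) * pochInf (qpow τ 2) (-qpow τ 1) *
      pochInf (qpow τ 2) (-qpow τ 1) * pochInf (qpow τ 2) (qpow τ 1) *
      pochInf (qpow τ 2) (-qpow τ 2)) /
    (pochInf (qpow τ 2) (qpow τ 2) * jTheta τ mu * jTheta τ x) * cosKernel τ mu x

/-!
The product-to-sum formula for the cosine turns the kernel into the mean of the theta series
`∑ q^{m²} q^{my}` at `y = μ ± x`, and the Jacobi triple product identity factors each of them as
`(q²;q²)_∞ ϑ(y)`. The triple product is the limit, by dominated convergence, of the `q`-binomial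
theorem with `2n` factors recentred at its middle term: the coefficients `[2n, n+k]` in base `q²`
are bounded and tend to `1 / (q²;q²)_∞`. The prefactor of `𝔈₀⁺` collapses by Euler's identity
`(q;q²)_∞ (-q;q)_∞ = 1`.
-/

/-- The finite `q`-shifted factorial `(b;q)_n`. -/
def qPoch {R : Type*} [CommRing R] (q b : R) (n : ℕ) : R := ∏ i ∈ Finset.range n, (1 - b * q ^ i)

/-- The Gaussian binomial coefficient `[n, k]_q`, defined by the `q`-Pascal rule so that it makes
sense without dividing by `1 - q ^ i`. -/
def gaussBinom {R : Type*} [Semiring R] (q : R) : ℕ → ℕ → R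
  | _, 0 => 1
  | 0, _ + 1 => 0
  | n + 1, k + 1 => gaussBinom q n k + q ^ (k + 1) * gaussBinom q n (k + 1)

section GaussBinomPascal

variable {R : Type*} [Semiring R] (q : R)

lemma gaussBinom_zero_right (n : ℕ) : gaussBinom q n 0 = 1 := by
  cases n <;> rfl

lemma gaussBinom_succ_succ (n k : ℕ) :
    gaussBinom q (n + 1) (k + 1) = gaussBinom q n k + q ^ (k + 1) * gaussBinom q n (k + 1) :=
  rfl

lemma gaussBinom_eq_zero_of_lt {n k : ℕ} (h : n < k) : gaussBinom q n k = 0 := by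
  induction n generalizing k with
  | zero =>
    obtain ⟨k, rfl⟩ := Nat.exists_eq_add_one.mpr h
    rfl
  | succ n ih =>
    obtain ⟨k, rfl⟩ := Nat.exists_eq_add_one.mpr (Nat.zero_lt_of_lt h)
    rw [gaussBinom_succ_succ, ih (by omega), ih (by omega), mul_zero, add_zero]

lemma gaussBinom_self (n : ℕ) : gaussBinom q n n = 1 := by
  induction n with
  | zero => rfl
  | succ n ih => simp [gaussBinom_succ_succ, ih, gaussBinom_eq_zero_of_lt]

end GaussBinomPascal

section QBinomialTheorem

variable {R : Type*} [CommRing R] (q : R)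

lemma qPoch_zero (b : R) : qPoch q b 0 = 1 := Finset.prod_range_zero _

lemma qPoch_succ (b : R) (n : ℕ) : qPoch q b (n + 1) = qPoch q b n * (1 - b * q ^ n) :=
  Finset.prod_range_succ _ n

lemma qPoch_add (b : R) (m n : ℕ) :
    qPoch q b (m + n) = qPoch q b m * qPoch q (b * q ^ m) n := by
  simp only [qPoch, Finset.prod_range_add, pow_add, mul_assoc]

lemma qPoch_succ' (b : R) (n : ℕ) : qPoch q b (n + 1) = (1 - b) * qPoch q (b * q) n := by
  rw [add_comm, qPoch_add, qPoch_succ, qPoch_zero, pow_zero, pow_one, one_mul, mul_one]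

lemma gaussBinom_mul_qPoch_mul_qPoch (a b : ℕ) :
    gaussBinom q (a + b) a * (qPoch q q a * qPoch q q b) = qPoch q q (a + b) := by
  induction a generalizing b with
  | zero => simp [gaussBinom_zero_right, qPoch_zero]
  | succ a iha =>
    induction b with
    | zero => simp [gaussBinom_self, qPoch_zero]
    | succ b ihb =>
      have left := iha (b + 1)
      rw [show a + 1 + b = a + (b + 1) by omega] at ihb
      rw [show a + 1 + (b + 1) = a + (b + 1) + 1 by omega, gaussBinom_succ_succ]
      simp only [qPoch_succ q q a, qPoch_succ q q b, qPoch_succ q q (a + (b + 1))] at left ihb ⊢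
      linear_combination (1 - q * q ^ a) * left + q ^ (a + 1) * (1 - q * q ^ b) * ihb

theorem qPoch_neg_eq_sum_gaussBinom (x : R) (n : ℕ) :
    qPoch q (-x) n =
      ∑ k ∈ Finset.range (n + 1), q ^ k.choose 2 * gaussBinom q n k * x ^ k := by
  induction n generalizing x with
  | zero => simp [qPoch_zero, gaussBinom_zero_right]
  | succ n ih =>
    let c (k : ℕ) : R := q ^ k.choose 2 * gaussBinom q n k * (x * q) ^ k
    have pascal (k : ℕ) : q ^ (k + 1).choose 2 * gaussBinom q (n + 1) (k + 1) * x ^ (k + 1) =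
        x * c k + c (k + 1) := by
      simp only [c, gaussBinom_succ_succ, Nat.choose_succ_succ' k 1, Nat.choose_one_right]
      ring
    have shift : ∑ k ∈ Finset.range (n + 1), c (k + 1) + 1 = ∑ k ∈ Finset.range (n + 1), c k := by
      have bottom : c 0 = 1 := by simp [c, gaussBinom_zero_right]
      have top : c (n + 1) = 0 := by simp [c, gaussBinom_eq_zero_of_lt]
      rw [← bottom, ← Finset.sum_range_succ', Finset.sum_range_succ, top, add_zero]
    calc qPoch q (-x) (n + 1) = (1 + x) * ∑ k ∈ Finset.range (n + 1), c k := by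
          rw [qPoch_succ', neg_mul, ih, sub_neg_eq_add]
      _ = ∑ k ∈ Finset.range (n + 1), (x * c k + c (k + 1)) + 1 := by
          rw [Finset.sum_add_distrib, ← Finset.mul_sum, add_assoc, shift]
          ring
      _ = _ := by
          rw [Finset.sum_range_succ' _ (n + 1)]
          simp [pascal, gaussBinom_zero_right]

end QBinomialTheorem

section FiniteTripleProduct

variable {K : Type*} [Field K] {q z : K}

lemma qPoch_sq_reverse (hq : q ≠ 0) (hz : z ≠ 0) (n : ℕ) :
    qPoch (q ^ 2) (-(z * q ^ (1 - 2 * n : ℤ))) n * q ^ (n ^ 2) =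
      z ^ n * qPoch (q ^ 2) (-(q * z⁻¹)) n := by
  induction n with
  | zero => simp [qPoch_zero]
  | succ n ih =>
    have shift : q ^ (1 - 2 * ((n + 1 : ℕ) : ℤ)) * q ^ 2 = q ^ (1 - 2 * n : ℤ) := by
      rw [← zpow_natCast q 2, ← zpow_add₀ hq]
      congr 1
      push_cast
      ring
    have cancel : q ^ (1 - 2 * ((n + 1 : ℕ) : ℤ)) * q ^ (2 * n + 1) = 1 := by
      rw [← zpow_natCast q (2 * n + 1), ← zpow_add₀ hq, ← zpow_zero q]
      congr 1
      push_cast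
      ring
    have factor : (1 + z * q ^ (1 - 2 * ((n + 1 : ℕ) : ℤ))) * q ^ (2 * n + 1) =
        z * (1 + q * z⁻¹ * (q ^ 2) ^ n) := by
      rw [add_mul, mul_assoc, cancel]
      field_simp
      ring
    rw [qPoch_succ', qPoch_succ, neg_mul, mul_assoc z, shift, sub_neg_eq_add, neg_mul,
      sub_neg_eq_add, show (n + 1) ^ 2 = n ^ 2 + (2 * n + 1) by ring, pow_add]
    linear_combination (z * (1 + q * z⁻¹ * (q ^ 2) ^ n)) * ih +
      (qPoch (q ^ 2) (-(z * q ^ (1 - 2 * n : ℤ))) n * q ^ (n ^ 2)) * factor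

lemma sq_pow_choose_two_mul_zpow (hq : q ≠ 0) (hz : z ≠ 0) (n j : ℕ) :
    (q ^ 2) ^ j.choose 2 * (z * q ^ (1 - 2 * n : ℤ)) ^ j * q ^ (n ^ 2) =
      z ^ n * (q ^ ((j - n : ℤ) ^ 2) * z ^ (j - n : ℤ)) := by
  have two_mul_choose : (2 : ℤ) * j.choose 2 = j * (j - 1) := by
    have h : (2 : ℚ) * j.choose 2 = j * (j - 1) := by
      rw [Nat.cast_choose_two]
      ring
    exact_mod_cast h
  have q_exponent : (q ^ 2) ^ j.choose 2 * (q ^ (1 - 2 * n : ℤ)) ^ j * q ^ (n ^ 2) =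
      q ^ ((j - n : ℤ) ^ 2) := by
    rw [← pow_mul]
    simp only [← zpow_natCast, ← zpow_mul]
    rw [← zpow_add₀ hq, ← zpow_add₀ hq]
    congr 1
    push_cast
    linear_combination two_mul_choose
  have z_exponent : z ^ n * z ^ (j - n : ℤ) = z ^ j := by
    rw [← zpow_natCast, ← zpow_natCast, ← zpow_add₀ hz, add_sub_cancel]
  rw [← q_exponent, mul_left_comm, z_exponent, mul_pow]
  ring

lemma sum_range_eq_sum_Icc_int {M : Type*} [AddCommMonoid M] (f : ℕ → ℤ → M) (n : ℕ) :
    ∑ j ∈ Finset.range (2 * n + 1), f j (j - n) =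
      ∑ k ∈ Finset.Icc (-n : ℤ) n, f (n + k).toNat k := by
  refine Finset.sum_nbij' (fun j => (j : ℤ) - n) (fun k => (n + k).toNat) ?_ ?_ ?_ ?_ ?_ <;>
    intro j hj <;> simp only [Finset.mem_range, Finset.mem_Icc] at hj ⊢
  · omega
  · omega
  · omega
  · omega
  · simp

/-- MacMahon's finite form: the `q`-binomial theorem in base `q²` at `x = z q^{1-2n}`, whose `2n`
factors split into the two products. -/
theorem finite_jacobi_triple_product (hq : q ≠ 0) (hz : z ≠ 0) (n : ℕ) :
    qPoch (q ^ 2) (-(q * z)) n * qPoch (q ^ 2) (-(q * z⁻¹)) n =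
      ∑ k ∈ Finset.Icc (-n : ℤ) n,
        gaussBinom (q ^ 2) (2 * n) (n + k).toNat * (q ^ (k ^ 2) * z ^ k) := by
  have upper_half : -(z * q ^ (1 - 2 * n : ℤ)) * (q ^ 2) ^ n = -(q * z) := by
    rw [neg_mul, mul_assoc, ← pow_mul, ← zpow_natCast q (2 * n), ← zpow_add₀ hq]
    simp [mul_comm]
  have split : qPoch (q ^ 2) (-(z * q ^ (1 - 2 * n : ℤ))) (2 * n) * q ^ (n ^ 2) =
      z ^ n * (qPoch (q ^ 2) (-(q * z)) n * qPoch (q ^ 2) (-(q * z⁻¹)) n) := by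
    rw [two_mul (n : ℕ), qPoch_add, upper_half, mul_right_comm, qPoch_sq_reverse hq hz]
    ring
  apply mul_left_cancel₀ (pow_ne_zero n hz)
  rw [← split, qPoch_neg_eq_sum_gaussBinom, Finset.sum_mul, Finset.mul_sum,
    ← sum_range_eq_sum_Icc_int
      fun j k => z ^ n * (gaussBinom (q ^ 2) (2 * n) j * (q ^ (k ^ 2) * z ^ k))]
  refine Finset.sum_congr rfl fun j _ => ?_
  linear_combination gaussBinom (q ^ 2) (2 * n) j * sq_pow_choose_two_mul_zpow hq hz n j

end FiniteTripleProduct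

section InfiniteProducts

open Filter Topology

variable {Q : ℂ}

lemma norm_sq_lt_one (hQ : ‖Q‖ < 1) : ‖Q ^ 2‖ < 1 := by
  simpa only [norm_pow] using pow_lt_one₀ (norm_nonneg Q) hQ two_ne_zero

lemma one_sub_mul_pow_self_ne_zero (hQ : ‖Q‖ < 1) (n : ℕ) : 1 - Q * Q ^ n ≠ 0 := by
  rw [← pow_succ', sub_ne_zero]
  intro h
  have : ‖Q‖ ^ (n + 1) < 1 := pow_lt_one₀ (norm_nonneg Q) hQ n.succ_ne_zero
  rw [← norm_pow, ← h, norm_one] at this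
  exact this.false

lemma summable_norm_neg_mul_pow (hQ : ‖Q‖ < 1) (b : ℂ) :
    Summable fun n : ℕ => ‖-(b * Q ^ n)‖ := by
  simp only [norm_neg, norm_mul]
  exact (summable_norm_geometric_of_norm_lt_one hQ).mul_left _

lemma multipliable_one_sub_mul_pow (hQ : ‖Q‖ < 1) (b : ℂ) :
    Multipliable fun n : ℕ => 1 - b * Q ^ n := by
  simpa only [← sub_eq_add_neg] using
    multipliable_one_add_of_summable (summable_norm_neg_mul_pow hQ b)

lemma tendsto_qPoch (hQ : ‖Q‖ < 1) (b : ℂ) :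
    Tendsto (qPoch Q b) atTop (𝓝 (pochInf Q b)) :=
  (multipliable_one_sub_mul_pow hQ b).tendsto_prod_tprod_nat

lemma qPoch_self_ne_zero (hQ : ‖Q‖ < 1) (n : ℕ) : qPoch Q Q n ≠ 0 :=
  Finset.prod_ne_zero_iff.mpr fun i _ => one_sub_mul_pow_self_ne_zero hQ i

lemma pochInf_self_ne_zero (hQ : ‖Q‖ < 1) : pochInf Q Q ≠ 0 := by
  simpa only [pochInf, sub_eq_add_neg] using
    tprod_one_add_ne_zero_of_summable (f := fun n : ℕ => -(Q * Q ^ n))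
      (by simpa only [← sub_eq_add_neg] using one_sub_mul_pow_self_ne_zero hQ)
      (summable_norm_neg_mul_pow hQ Q)

lemma pochInf_mul_pochInf_neg (hQ : ‖Q‖ < 1) (b : ℂ) :
    pochInf Q b * pochInf Q (-b) = pochInf (Q ^ 2) (b ^ 2) := by
  rw [pochInf, pochInf, ← (multipliable_one_sub_mul_pow hQ b).tprod_mul
    (multipliable_one_sub_mul_pow hQ (-b)), pochInf]
  exact tprod_congr fun n => by ring

lemma pochInf_sq_mul_pochInf_sq (hQ : ‖Q‖ < 1) (b : ℂ) :
    pochInf (Q ^ 2) b * pochInf (Q ^ 2) (b * Q) = pochInf Q b := by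
  have hQ2 := norm_sq_lt_one hQ
  have even (n : ℕ) : 1 - b * Q ^ (2 * n) = 1 - b * (Q ^ 2) ^ n := by ring
  have odd (n : ℕ) : 1 - b * Q ^ (2 * n + 1) = 1 - b * Q * (Q ^ 2) ^ n := by ring
  simpa only [even, odd, pochInf] using tprod_even_mul_odd (f := fun n => 1 - b * Q ^ n)
    (by simpa only [even] using multipliable_one_sub_mul_pow hQ2 b)
    (by simpa only [odd] using multipliable_one_sub_mul_pow hQ2 (b * Q))

/-- Euler's identity `(-Q; Q)_∞ (Q; Q²)_∞ = 1` with `Q = q²`, where `(q²; q⁴)_∞` is split as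
`(q; q²)_∞ (-q; q²)_∞`. -/
lemma pochInf_mul_neg_mul_neg_sq_eq_one {q : ℂ} (hq : ‖q ^ 2‖ < 1) :
    pochInf (q ^ 2) q * pochInf (q ^ 2) (-q) * pochInf (q ^ 2) (-q ^ 2) = 1 := by
  apply mul_right_cancel₀ (pochInf_self_ne_zero hq)
  calc pochInf (q ^ 2) q * pochInf (q ^ 2) (-q) * pochInf (q ^ 2) (-q ^ 2) *
        pochInf (q ^ 2) (q ^ 2)
      = pochInf ((q ^ 2) ^ 2) (q ^ 2) * pochInf ((q ^ 2) ^ 2) (q ^ 2 * q ^ 2) := by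
        rw [pochInf_mul_pochInf_neg hq, mul_assoc, mul_comm (pochInf (q ^ 2) (-q ^ 2)),
          pochInf_mul_pochInf_neg hq, sq (q ^ 2)]
    _ = 1 * pochInf (q ^ 2) (q ^ 2) := by rw [pochInf_sq_mul_pochInf_sq hq, one_mul]

lemma gaussBinom_add_eq_div (hQ : ‖Q‖ < 1) (a b : ℕ) :
    gaussBinom Q (a + b) a = qPoch Q Q (a + b) / (qPoch Q Q a * qPoch Q Q b) :=
  eq_div_of_mul_eq (mul_ne_zero (qPoch_self_ne_zero hQ a) (qPoch_self_ne_zero hQ b))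
    (gaussBinom_mul_qPoch_mul_qPoch Q a b)

lemma tendsto_gaussBinom_add {ι : Type*} {l : Filter ι} (hQ : ‖Q‖ < 1) {a b : ι → ℕ}
    (ha : Tendsto a l atTop) (hb : Tendsto b l atTop) :
    Tendsto (fun i => gaussBinom Q (a i + b i) (a i)) l (𝓝 (pochInf Q Q)⁻¹) := by
  have hP := pochInf_self_ne_zero hQ
  have lim := tendsto_qPoch hQ Q
  have ratio := (lim.comp (ha.atTop_add_atTop hb)).div ((lim.comp ha).mul (lim.comp hb))
    (mul_ne_zero hP hP)
  rw [div_mul_cancel_left₀ hP] at ratio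
  simpa only [gaussBinom_add_eq_div hQ] using! ratio

lemma tendsto_gaussBinom_central (hQ : ‖Q‖ < 1) (k : ℤ) :
    Tendsto (fun n : ℕ => gaussBinom Q (2 * n) (n + k).toNat) atTop (𝓝 (pochInf Q Q)⁻¹) := by
  have atTop_toNat (m : ℤ) : Tendsto (fun n : ℕ => (n + m).toNat) atTop atTop :=
    tendsto_atTop.mpr fun N => by
      filter_upwards [eventually_ge_atTop (N + m.natAbs)] with n hn
      omega
  refine (tendsto_gaussBinom_add hQ (atTop_toNat k) (atTop_toNat (-k))).congr' ?_
  filter_upwards [eventually_ge_atTop k.natAbs] with n hn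
  congr 1
  omega

lemma exists_norm_gaussBinom_le (hQ : ‖Q‖ < 1) : ∃ C, ∀ n k, ‖gaussBinom Q n k‖ ≤ C := by
  have lim := tendsto_qPoch hQ Q
  obtain ⟨A, hA⟩ := (Metric.isBounded_range_of_tendsto _ lim).exists_norm_le
  obtain ⟨B, hB⟩ := (Metric.isBounded_range_of_tendsto _
    (lim.inv₀ (pochInf_self_ne_zero hQ))).exists_norm_le
  rw [Set.forall_mem_range] at hA hB
  have hA0 : 0 ≤ A := (norm_nonneg _).trans (hA 0)
  have hB0 : 0 ≤ B := (norm_nonneg _).trans (hB 0)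
  refine ⟨A * (B * B), fun n k => ?_⟩
  rcases lt_or_ge n k with h | h
  · rw [gaussBinom_eq_zero_of_lt Q h, norm_zero]
    positivity
  · obtain ⟨m, rfl⟩ := Nat.exists_eq_add_of_le h
    rw [gaussBinom_add_eq_div hQ, div_eq_mul_inv, mul_inv, norm_mul, norm_mul]
    gcongr
    exacts [hA _, hB _, hB _]

end InfiniteProducts

section JacobiTripleProduct

open Filter Topology Function.Periodic

lemma qParam_zpow_sq_mul_qParam_zpow (k : ℤ) (w τ : ℂ) :
    qParam 2 τ ^ (k ^ 2) * qParam 1 w ^ k = jacobiTheta₂_term k w τ := by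
  rw [qParam, qParam, ← exp_int_mul, ← exp_int_mul, ← exp_add, jacobiTheta₂_term]
  congr 1
  push_cast
  ring

lemma summable_zpow_sq_mul_zpow {q z : ℂ} (hq0 : q ≠ 0) (hq : ‖q‖ < 1) (hz : z ≠ 0) :
    Summable fun k : ℤ => q ^ (k ^ 2) * z ^ k := by
  have him : 0 < (invQParam 2 q).im := by
    rw [im_invQParam]
    exact mul_pos_of_neg_of_neg (div_neg_of_neg_of_pos (by norm_num) Real.two_pi_pos)
      (Real.log_neg (norm_pos_iff.mpr hq0) hq)
  rw [← qParam_right_inv two_ne_zero hq0, ← qParam_right_inv one_ne_zero hz]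
  simpa only [qParam_zpow_sq_mul_qParam_zpow] using (summable_jacobiTheta₂_term_iff _ _).mpr him

theorem hasSum_jacobi_triple_product {q z : ℂ} (hq0 : q ≠ 0) (hq : ‖q‖ < 1) (hz : z ≠ 0) :
    HasSum (fun k : ℤ => q ^ (k ^ 2) * z ^ k)
      (pochInf (q ^ 2) (q ^ 2) *
        (pochInf (q ^ 2) (-(q * z)) * pochInf (q ^ 2) (-(q * z⁻¹)))) := by
  have hQ := norm_sq_lt_one hq
  have summable := summable_zpow_sq_mul_zpow hq0 hq hz
  obtain ⟨C, hC⟩ := exists_norm_gaussBinom_le hQ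
  let partialTerm (n : ℕ) : ℤ → ℂ := Set.indicator (Finset.Icc (-n : ℤ) n)
    fun k => gaussBinom (q ^ 2) (2 * n) (n + k).toNat * (q ^ (k ^ 2) * z ^ k)
  have sums : Tendsto (fun n => ∑' k, partialTerm n k) atTop
      (𝓝 (pochInf (q ^ 2) (-(q * z)) * pochInf (q ^ 2) (-(q * z⁻¹)))) := by
    simp only [partialTerm, ← sum_eq_tsum_indicator, ← finite_jacobi_triple_product hq0 hz]
    exact (tendsto_qPoch hQ _).mul (tendsto_qPoch hQ _)
  have terms (k : ℤ) : Tendsto (partialTerm · k) atTop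
      (𝓝 ((pochInf (q ^ 2) (q ^ 2))⁻¹ * (q ^ (k ^ 2) * z ^ k))) := by
    refine ((tendsto_gaussBinom_central hQ k).mul_const _).congr' ?_
    filter_upwards [eventually_ge_atTop k.natAbs] with n hn
    have mem : k ∈ (Finset.Icc (-n : ℤ) n : Set ℤ) :=
      Finset.mem_coe.mpr (Finset.mem_Icc.mpr (by omega))
    simp only [partialTerm, Set.indicator_of_mem mem]
  have dominated (n : ℕ) (k : ℤ) : ‖partialTerm n k‖ ≤ C * ‖q ^ (k ^ 2) * z ^ k‖ := by
    refine (norm_indicator_le_norm_self _ _).trans ?_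
    rw [norm_mul]
    gcongr
    exact hC _ _
  have limit := tendsto_nhds_unique sums <|
    tendsto_tsum_of_dominated_convergence (summable.norm.mul_left C) terms
      (Eventually.of_forall dominated)
  rw [limit, tsum_mul_left, mul_inv_cancel_left₀ (pochInf_self_ne_zero hQ)]
  exact summable.hasSum

end JacobiTripleProduct

section Theta

variable {τ : ℂ}

lemma qpow_ne_zero (τ u : ℂ) : qpow τ u ≠ 0 := exp_ne_zero _

lemma qpow_add (τ u v : ℂ) : qpow τ (u + v) = qpow τ u * qpow τ v := by
  rw [qpow, mul_add, exp_add, qpow, qpow]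

lemma qpow_neg (τ u : ℂ) : qpow τ (-u) = (qpow τ u)⁻¹ := by
  rw [qpow, mul_neg, exp_neg, qpow]

lemma qpow_two (τ : ℂ) : qpow τ 2 = qpow τ 1 ^ 2 := by
  rw [sq, ← qpow_add, one_add_one_eq_two]

lemma norm_qpow_one_lt_one (hτ : 0 < τ.im) : ‖qpow τ 1‖ < 1 := by
  simpa [qpow, Function.Periodic.qParam] using
    Function.Periodic.norm_qParam_lt_one zero_lt_one hτ

lemma norm_qpow_two_lt_one (hτ : 0 < τ.im) : ‖qpow τ 2‖ < 1 :=
  qpow_two τ ▸ norm_sq_lt_one (norm_qpow_one_lt_one hτ)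

lemma qpow_one_zpow_sq_mul_qpow_zpow (τ x : ℂ) (k : ℤ) :
    qpow τ 1 ^ (k ^ 2) * qpow τ x ^ k = jacobiTheta₂_term k (τ * x) (2 * τ) := by
  rw [← qParam_zpow_sq_mul_qParam_zpow, qpow, qpow, Function.Periodic.qParam,
    Function.Periodic.qParam]
  congr 3 <;> push_cast <;> ring

theorem jacobiTheta₂_eq_pochInf_mul_jTheta (hτ : 0 < τ.im) (x : ℂ) :
    jacobiTheta₂ (τ * x) (2 * τ) = pochInf (qpow τ 2) (qpow τ 2) * jTheta τ x := by
  have triple := hasSum_jacobi_triple_product (qpow_ne_zero τ 1) (norm_qpow_one_lt_one hτ)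
    (qpow_ne_zero τ x)
  simp only [qpow_one_zpow_sq_mul_qpow_zpow, ← qpow_two, ← qpow_neg, ← qpow_add,
    ← sub_eq_add_neg] at triple
  exact triple.tsum_eq

lemma jacobiTheta₂_term_add_jacobiTheta₂_term_neg (n : ℤ) (z τ : ℂ) :
    jacobiTheta₂_term n z τ + jacobiTheta₂_term (-n) z τ =
      2 * (cos (2 * Real.pi * n * z) * exp (Real.pi * I * n ^ 2 * τ)) := by
  rw [jacobiTheta₂_term, jacobiTheta₂_term, exp_add, exp_add, Int.cast_neg, neg_sq, ← add_mul,
    ← mul_assoc, two_cos]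
  congr 3 <;> ring_nf

lemma hasSum_nat_jacobiTheta₂ (z : ℂ) (hτ : 0 < τ.im) :
    HasSum (fun n : ℕ => cos (2 * Real.pi * (n + 1) * z) * exp (Real.pi * I * (n + 1) ^ 2 * τ))
      ((jacobiTheta₂ z τ - 1) / 2) := by
  have folded := (hasSum_nat_add_iff' 1).mpr (hasSum_jacobiTheta₂_term z hτ).nat_add_neg
  have zero_term : jacobiTheta₂_term 0 z τ = 1 := by simp [jacobiTheta₂_term]
  simp only [jacobiTheta₂_term_add_jacobiTheta₂_term_neg, zero_term] at folded
  convert! folded.div_const 2 using 1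
  · simp
  · simp only [Finset.sum_range_one, Nat.cast_zero, Int.cast_zero, mul_zero, zero_mul,
      zero_pow two_ne_zero, cos_zero, exp_zero]
    ring

theorem cosKernel_eq_jacobiTheta₂ (hτ : 0 < τ.im) (mu x : ℂ) :
    cosKernel τ mu x =
      (jacobiTheta₂ (τ * (mu + x)) (2 * τ) + jacobiTheta₂ (τ * (mu - x)) (2 * τ)) / 2 := by
  have hτ2 : 0 < (2 * τ).im := by simpa using hτ
  have sum := ((hasSum_nat_jacobiTheta₂ (τ * (mu + x)) hτ2).add
    (hasSum_nat_jacobiTheta₂ (τ * (mu - x)) hτ2)).div_const 2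
  have product_to_sum (m : ℕ) :
      cos (2 * Real.pi * (m + 1) * τ * mu) * cos (2 * Real.pi * (m + 1) * τ * x) *
          qpow τ ((m + 1) ^ 2) =
        (cos (2 * Real.pi * (m + 1) * (τ * (mu + x))) * exp (Real.pi * I * (m + 1) ^ 2 * (2 * τ)) +
          cos (2 * Real.pi * (m + 1) * (τ * (mu - x))) *
            exp (Real.pi * I * (m + 1) ^ 2 * (2 * τ))) / 2 := by
    rw [← add_mul, cos_add_cos, qpow]
    ring_nf
  rw [cosKernel, tsum_congr product_to_sum, sum.tsum_eq]
  ring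

theorem cosKernel_eq_jTheta (hτ : 0 < τ.im) (mu x : ℂ) :
    cosKernel τ mu x =
      pochInf (qpow τ 2) (qpow τ 2) / 2 * (jTheta τ (mu + x) + jTheta τ (mu - x)) := by
  rw [cosKernel_eq_jacobiTheta₂ hτ, jacobiTheta₂_eq_pochInf_mul_jTheta hτ,
    jacobiTheta₂_eq_pochInf_mul_jTheta hτ]
  ring

lemma E0plus_eq_mul_cosKernel (hτ : 0 < τ.im) (mu x : ℂ) :
    E0plus τ mu x =
      pochInf (qpow τ 2) (-qpow τ 1) * pochInf (qpow τ 2) (-qpow τ 1) /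
        (pochInf (qpow τ 2) (qpow τ 2) * jTheta τ mu * jTheta τ x) * cosKernel τ mu x := by
  have euler := pochInf_mul_neg_mul_neg_sq_eq_one (norm_sq_lt_one (norm_qpow_one_lt_one hτ))
  rw [← qpow_two] at euler
  rw [E0plus]
  congr 2
  linear_combination pochInf (qpow τ 2) (-qpow τ 1) * pochInf (qpow τ 2) (-qpow τ 1) * euler

theorem E0plus_eq_jTheta (hτ : 0 < τ.im) (mu x : ℂ) :
    E0plus τ mu x =
      (pochInf (qpow τ 2) (-qpow τ 1) * pochInf (qpow τ 2) (-qpow τ 1) / 2) *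
        (jTheta τ (mu + x) + jTheta τ (mu - x)) / (jTheta τ mu * jTheta τ x) := by
  have hP := pochInf_self_ne_zero (norm_qpow_two_lt_one hτ)
  rw [E0plus_eq_mul_cosKernel hτ, cosKernel_eq_jTheta hτ]
  field_simp

end Theta

theorem askey_wilson_function_elliptic_cosine_general {τ : ℂ} (hτ : 0 < τ.im) :
    (∀ mu x : ℂ, cosKernel τ mu x =
      (pochInf (qpow τ 2) (qpow τ 2) / 2) * (jTheta τ (mu + x) + jTheta τ (mu - x))) ∧
    (∀ mu x : ℂ, jTheta τ mu * jTheta τ x ≠ 0 →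
      E0plus τ mu x =
        (pochInf (qpow τ 2) (-qpow τ 1) * pochInf (qpow τ 2) (-qpow τ 1) / 2) *
          (jTheta τ (mu + x) + jTheta τ (mu - x)) / (jTheta τ mu * jTheta τ x)) :=
  ⟨cosKernel_eq_jTheta hτ, fun mu x _ => E0plus_eq_jTheta hτ mu x⟩

/-- The theta-expansion of the cosine kernel and the identification of the Askey-Wilson
function at the self-dual parameters with the elliptic cosine kernel:
`𝔈₀⁺(μ,x) = ((−q,−q;q²)_∞/2)·(ϑ(μ+x)+ϑ(μ−x))/(ϑ(μ)ϑ(x))`. -/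
theorem askey_wilson_function_elliptic_cosine (t : ℝ) (ht : 0 < t) (τ : ℂ)
    (hτ : τ = Complex.I * (t : ℂ)) :
    (∀ mu x : ℂ, cosKernel τ mu x =
      (pochInf (qpow τ 2) (qpow τ 2) / 2) * (jTheta τ (mu + x) + jTheta τ (mu - x))) ∧
    (∀ mu x : ℂ, jTheta τ mu * jTheta τ x ≠ 0 →
      E0plus τ mu x =
        (pochInf (qpow τ 2) (-qpow τ 1) * pochInf (qpow τ 2) (-qpow τ 1) / 2) *
          (jTheta τ (mu + x) + jTheta τ (mu - x)) / (jTheta τ mu * jTheta τ x)) :=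
  askey_wilson_function_elliptic_cosine_general (by simpa [hτ] using ht)
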